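/- (Equation (ymer3).) As n → ∞, the variance of the final greedy score satisfies Var(S_n^gr)/n → 4 − (27 − 6√3)/(4π). -/

import Mathlib

/-!
As long as no throw is used up, every throw is drawn uniformly and the score makes independent
centred steps. Once throw `c` is used up, with counts `N` and `k` rounds left, the score plus
`n - N (c + 1)` and the quantity `2 * N (c + 1) - N (c + 2) - n` are martingales, and the final
score is the first one plus the positive part of the second; so the final score is, up to an error
`O(√k)` in `L²`, the score so far plus the largest cyclic difference of the throw counts. As `k` is
itself of order `√n`, this error is `O(n^(1/4))`, and letting the throws continue to be drawn
uniformly changes that cyclic difference by no more. Hence, up to `o(√n)`, the mean of the final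
score is that of the largest cyclic difference after `3 * n` uniform throws, and, up to `o(n)`, its
second moment is that of the cyclic difference plus `2 * n`. By the central limit theorem in the
plane orthogonal to `(1, 1, 1)`, both moments converge after scaling to Gaussian moments of the
support function of an equilateral triangle, which are elementary integrals in polar coordinates.
-/

open MeasureTheory ProbabilityTheory Real Filter
open scoped ENNReal Topology

namespace RPSGreedy

/-- Standard basis vector `e i` of `Fin 3 → ℕ`. -/
def e (i : Fin 3) : Fin 3 → ℕ := fun j => if j = i then 1 else 0

/-- One-step transition probabilities of the greedy game process. -/
noncomputable def stepProb (n : ℕ) (p q : (Fin 3 → ℕ) × ℤ) : ℝ≥0∞ :=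
  let k := (Finset.univ.filter fun i => p.1 i = n).card
  if k = 0 then
    (if (∃ i : Fin 3, q.1 = p.1 + e i) ∧ (q.2 = p.2 - 1 ∨ q.2 = p.2 ∨ q.2 = p.2 + 1)
      then 1/9 else 0)
  else if k = 1 then
    ∑ c : Fin 3, (if p.1 c = n then
      (if q.1 = p.1 + e (c+1) ∧ q.2 = p.2 + 1 then 2/9
       else if q.1 = p.1 + e (c+1) ∧ q.2 = p.2 - 1 then 1/9
       else if q.1 = p.1 + e (c+2) ∧ q.2 = p.2 then 4/9
       else if q.1 = p.1 + e (c+2) ∧ q.2 = p.2 + 1 then 2/9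
       else 0)
      else 0)
  else if k = 2 then
    (if ∃ i : Fin 3, p.1 i < n ∧ q.1 = p.1 + e i ∧ q.2 = p.2 + 1 then 1 else 0)
  else 0

/-- The greedy game process over `3n` rounds: initial state and Markov transitions. -/
def IsGreedyProcess (n : ℕ) {Ω : Type*} [MeasurableSpace Ω] (μ : Measure Ω)
    (NS : ℕ → Ω → (Fin 3 → ℕ) × ℤ) : Prop :=
  IsProbabilityMeasure μ ∧
  (∀ t, Measurable (NS t)) ∧
  μ {ω | NS 0 ω = (fun _ => 0, 0)} = 1 ∧
  (∀ t, t < 3 * n → ∀ f : ℕ → (Fin 3 → ℕ) × ℤ,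
    μ {ω | ∀ u ≤ t + 1, NS u ω = f u}
      = stepProb n (f t) (f (t + 1)) * μ {ω | ∀ u ≤ t, NS u ω = f u})

section MarkovChain

variable {X ι Ω : Type*} [Fintype ι] {move : ι → X → X}

/-- The Markov operator `g ↦ (x ↦ E[g(next state) | current state x])` of a chain that moves from
`x` to `move i x` with probability `p i x`. -/
noncomputable def transitionOp (p : ι → X → ℝ) (move : ι → X → X) : Module.End ℝ (X → ℝ) where
  toFun g x := ∑ i, p i x * g (move i x)
  map_add' g h := by ext x; simp only [Pi.add_apply, mul_add, Finset.sum_add_distrib]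
  map_smul' c g := by
    ext x
    simp only [Pi.smul_apply, smul_eq_mul, Finset.mul_sum, RingHom.id_apply, mul_left_comm]

lemma transitionOp_apply (p : ι → X → ℝ) (g : X → ℝ) (x : X) :
    transitionOp p move g x = ∑ i, p i x * g (move i x) := rfl

lemma transitionOp_pow_nonneg {p : ι → X → ℝ} (hp : ∀ i x, 0 ≤ p i x) {g : X → ℝ}
    (hg : ∀ x, 0 ≤ g x) (k : ℕ) (x : X) : 0 ≤ (transitionOp p move ^ k) g x := by
  induction k generalizing x with
  | zero => exact hg x
  | succ k ih =>
    rw [pow_succ', Module.End.mul_apply]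
    exact Finset.sum_nonneg fun i _ => mul_nonneg (hp i x) (ih _)

lemma transitionOp_pow_mono {p : ι → X → ℝ} (hp : ∀ i x, 0 ≤ p i x) {g h : X → ℝ}
    (hgh : ∀ x, g x ≤ h x) (k : ℕ) (x : X) :
    (transitionOp p move ^ k) g x ≤ (transitionOp p move ^ k) h x := by
  have := transitionOp_pow_nonneg (move := move) hp (g := h - g) (fun y => sub_nonneg.2 (hgh y)) k x
  rwa [map_sub, Pi.sub_apply, sub_nonneg] at this

lemma transitionOp_pow_sq_sub {p : ι → X → ℝ} {k : ℕ} {x : X}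
    (h1 : (transitionOp p move ^ k) 1 x = 1) (g : X → ℝ) (a : ℝ) :
    (transitionOp p move ^ k) (fun y => (g y - a) ^ 2) x =
      (transitionOp p move ^ k) (fun y => g y ^ 2) x
        - 2 * a * (transitionOp p move ^ k) g x + a ^ 2 := by
  have hexp : (fun y => (g y - a) ^ 2) = (fun y => g y ^ 2) - (2 * a) • g + a ^ 2 • 1 := by
    ext y
    simp only [Pi.add_apply, Pi.sub_apply, Pi.smul_apply, smul_eq_mul, Pi.one_apply]
    ring
  rw [hexp]
  simp only [map_add, map_sub, map_smul, Pi.add_apply, Pi.sub_apply, Pi.smul_apply, smul_eq_mul,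
    h1, mul_one]

lemma sq_transitionOp_pow_sub_le {p : ι → X → ℝ} (hp : ∀ i x, 0 ≤ p i x) {k : ℕ} {x : X}
    (h1 : (transitionOp p move ^ k) 1 x = 1) (g : X → ℝ) (a : ℝ) :
    ((transitionOp p move ^ k) g x - a) ^ 2 ≤
      (transitionOp p move ^ k) (fun y => (g y - a) ^ 2) x := by
  set b := (transitionOp p move ^ k) g x
  have hvar := transitionOp_pow_nonneg (move := move) hp (fun y => sq_nonneg (g y - b)) k x
  rw [transitionOp_pow_sq_sub h1] at hvar ⊢
  nlinarith

variable [Countable X] [MeasurableSpace X] [DiscreteMeasurableSpace X] [MeasurableSpace Ω]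
  {μ : Measure Ω} {Z : ℕ → Ω → X} {P : X → X → ℝ≥0∞}

lemma map_history_succ_singleton (κ : Kernel X X) (hZ : ∀ t, Measurable (Z t)) {t : ℕ}
    (hpath : ∀ f : ℕ → X, μ {ω | ∀ u ≤ t + 1, Z u ω = f u} =
      κ (f t) {f (t + 1)} * μ {ω | ∀ u ≤ t, Z u ω = f u}) (x : Fin (t + 1) → X) (y : X) :
    μ.map (fun ω => (fun u : Fin (t + 1) => Z u ω, Z (t + 1) ω)) {(x, y)} =
      κ (x (Fin.last t)) {y} * μ.map (fun ω (u : Fin (t + 1)) => Z u ω) {x} := by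
  rw [Measure.map_apply (by fun_prop) (measurableSet_singleton _),
    Measure.map_apply (by fun_prop) (measurableSet_singleton _)]
  convert hpath fun u => if hu : u < t + 1 then x ⟨u, hu⟩ else y using 3
  · ext ω
    simp only [Set.mem_preimage, Set.mem_singleton_iff, Prod.mk.injEq, funext_iff,
      Fin.forall_iff, Set.mem_ofPred_eq]
    grind
  · simp [Fin.last]
  · simp
  · ext ω
    simp only [Set.mem_preimage, Set.mem_singleton_iff, funext_iff, Fin.forall_iff,
      Set.mem_ofPred_eq]
    grind

lemma map_succ_eq_comp_map (κ : Kernel X X) (hZ : ∀ t, Measurable (Z t)) {t : ℕ}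
    (hpath : ∀ f : ℕ → X, μ {ω | ∀ u ≤ t + 1, Z u ω = f u} =
      κ (f t) {f (t + 1)} * μ {ω | ∀ u ≤ t, Z u ω = f u}) :
    μ.map (Z (t + 1)) = κ ∘ₘ μ.map (Z t) := by
  set H : Ω → (Fin (t + 1) → X) := fun ω u => Z u ω
  have hH : Measurable H := measurable_pi_lambda _ fun u => hZ u
  have hHZ : Measurable fun ω => (H ω, Z (t + 1) ω) := hH.prodMk (hZ _)
  refine Measure.ext_of_singleton fun y => ?_
  calc μ.map (Z (t + 1)) {y}
      = ∑' x, ∑' y', ({y} : Set X).indicator 1 y' *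
          μ.map (fun ω => (H ω, Z (t + 1) ω)) {(x, y')} := by
        rw [← ENNReal.tsum_prod,
          ← lintegral_countable' fun p : (Fin (t + 1) → X) × X => ({y} : Set X).indicator 1 p.2,
          lintegral_map (measurable_of_countable _) hHZ,
          ← lintegral_map (measurable_of_countable _) (hZ (t + 1)),
          lintegral_indicator_one (measurableSet_singleton _)]
    _ = ∑' x, κ (x (Fin.last t)) {y} * μ.map H {x} := by
        refine tsum_congr fun x => ?_
        rw [tsum_eq_single y fun y' hy' => by simp [hy'],
          map_history_succ_singleton κ hZ hpath]
        simp [H]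
    _ = ∫⁻ ω, κ (Z t ω) {y} ∂μ := by
        rw [← lintegral_countable' fun x : Fin (t + 1) → X => κ (x (Fin.last t)) {y},
          lintegral_map (measurable_of_countable _) hH]
        simp [H]
    _ = (κ ∘ₘ μ.map (Z t)) {y} := by
        rw [Measure.bind_apply (measurableSet_singleton _) κ.aemeasurable,
          lintegral_map (measurable_of_countable _) (hZ t)]

/-- The kernel with transition probabilities `P` along the moves `move i`, through which the law of
the chain propagates. -/
noncomputable def moveKernel (P : X → X → ℝ≥0∞) (move : ι → X → X) : Kernel X X :=
  Kernel.ofFunOfCountable fun x => ∑ i, P x (move i x) • Measure.dirac (move i x)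

lemma moveKernel_singleton (hinj : ∀ x, Function.Injective fun i => move i x)
    (hsupp : ∀ x y, P x y ≠ 0 → ∃ i, move i x = y) (x y : X) :
    moveKernel P move x {y} = P x y := by
  classical
  have hsum : moveKernel P move x {y} = ∑ i, if move i x = y then P x y else 0 := by
    change (∑ i, P x (move i x) • Measure.dirac (move i x)) {y} = _
    rw [Measure.finsetSum_apply]
    refine Finset.sum_congr rfl fun i _ => ?_
    by_cases h : move i x = y <;> simp [h]
  rw [hsum]
  by_cases hy : P x y = 0
  · simp [hy]
  · obtain ⟨i, rfl⟩ := hsupp x y hy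
    simp [(hinj x).eq_iff]

lemma integrable_moveKernel (hfin : ∀ x y, P x y ≠ ∞) (g : X → ℝ) (x : X) :
    Integrable g (moveKernel P move x) :=
  integrable_finsetSum_measure.2 fun _ _ =>
    (integrable_dirac (by finiteness)).smul_measure (hfin _ _)

lemma integral_moveKernel (hfin : ∀ x y, P x y ≠ ∞) (g : X → ℝ) (x : X) :
    ∫ y, g y ∂moveKernel P move x = transitionOp (fun i x => (P x (move i x)).toReal) move g x := by
  change ∫ y, g y ∂(∑ i, P x (move i x) • Measure.dirac (move i x)) = _
  rw [integral_finsetSum_measure fun i _ =>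
    (integrable_dirac (by finiteness)).smul_measure (hfin _ _)]
  simp [transitionOp_apply, integral_smul_measure]

theorem integral_markovChain [IsProbabilityMeasure μ]
    (hinj : ∀ x, Function.Injective fun i => move i x)
    (hsupp : ∀ x y, P x y ≠ 0 → ∃ i, move i x = y) (hfin : ∀ x y, P x y ≠ ∞)
    (hZ : ∀ t, Measurable (Z t)) {x₀ : X} (h0 : μ {ω | Z 0 ω = x₀} = 1) {T : ℕ}
    (hpath : ∀ t < T, ∀ f : ℕ → X, μ {ω | ∀ u ≤ t + 1, Z u ω = f u} =
      P (f t) (f (t + 1)) * μ {ω | ∀ u ≤ t, Z u ω = f u}) {t : ℕ} (ht : t ≤ T) (g : X → ℝ) :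
    Integrable g (μ.map (Z t)) ∧
      ∫ x, g x ∂μ.map (Z t) =
        (transitionOp (fun i x => (P x (move i x)).toReal) move ^ t) g x₀ := by
  induction t generalizing g with
  | zero =>
    have hstart : μ.map (Z 0) = Measure.dirac x₀ := by
      have h : Z 0 =ᵐ[μ] fun _ => x₀ :=
        (prob_compl_eq_zero_iff (hZ 0 (measurableSet_singleton x₀))).2 h0
      rw [Measure.map_congr h, Measure.map_const, measure_univ, one_smul]
    rw [hstart]
    exact ⟨integrable_dirac (by finiteness), by simp⟩
  | succ t ih =>
    have hstep : μ.map (Z (t + 1)) = moveKernel P move ∘ₘ μ.map (Z t) :=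
      map_succ_eq_comp_map _ hZ fun f => by
        rw [moveKernel_singleton hinj hsupp]
        exact hpath t (by omega) f
    have hint : Integrable g (moveKernel P move ∘ₘ μ.map (Z t)) := by
      rw [Measure.integrable_comp_iff (measurable_of_countable g).aestronglyMeasurable]
      refine ⟨ae_of_all _ (integrable_moveKernel hfin g), ?_⟩
      simp only [integral_moveKernel hfin]
      exact (ih (by omega) _).1
    rw [hstep]
    refine ⟨hint, ?_⟩
    rw [Measure.comp_eq_comp_const_apply] at hint ⊢
    simp only [Kernel.integral_comp hint, Kernel.const_apply, integral_moveKernel hfin,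
      (ih (by omega) _).2, pow_succ, Module.End.mul_apply]

end MarkovChain

section GreedyOperator

lemma e_injective : Function.Injective e := by decide

lemma sum_fin_three_rotate {M : Type*} [AddCommMonoid M] (F : Fin 3 → M) (c : Fin 3) :
    ∑ i, F i = F c + F (c + 1) + F (c + 2) := by
  rw [← Equiv.sum_comp (Equiv.addLeft c) F, Fin.sum_univ_three]
  simp

lemma sum_signType {M : Type*} [AddCommMonoid M] (F : SignType → M) :
    ∑ d, F d = F (-1) + F 0 + F 1 := by
  have h : (Finset.univ : Finset SignType) = {-1, 0, 1} := by decide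
  rw [h, Finset.sum_insert (by decide), Finset.sum_insert (by decide), Finset.sum_singleton,
    add_assoc]

/-- The successor of a state when the `i`-th throw is played and the score changes by `d`. -/
def greedyMove (m : Fin 3 × SignType) (p : (Fin 3 → ℕ) × ℤ) : (Fin 3 → ℕ) × ℤ :=
  (p.1 + e m.1, p.2 + m.2)

lemma greedyMove_injective (p : (Fin 3 → ℕ) × ℤ) :
    Function.Injective fun m => greedyMove m p := by
  rintro ⟨i, d⟩ ⟨i', d'⟩ h
  simp only [greedyMove, Prod.mk.injEq, add_right_inj, e_injective.eq_iff] at h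
  obtain ⟨rfl, h⟩ := h
  cases d <;> cases d' <;> simp_all

lemma exists_greedyMove_of_stepProb_ne_zero {n : ℕ} (p q : (Fin 3 → ℕ) × ℤ)
    (h : stepProb n p q ≠ 0) : ∃ m, greedyMove m p = q := by
  have hq : ∃ i, q.1 = p.1 + e i ∧ (q.2 = p.2 - 1 ∨ q.2 = p.2 ∨ q.2 = p.2 + 1) := by
    contrapose! h
    unfold stepProb
    dsimp only
    split_ifs
    · grind
    · rfl
    · exact Finset.sum_eq_zero fun c _ => by grind
    · grind
    all_goals rfl
  obtain ⟨i, hi, hd | hd | hd⟩ := hq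
  · exact ⟨(i, -1), by simp [greedyMove, Prod.ext_iff, hi, hd, sub_eq_add_neg]⟩
  · exact ⟨(i, 0), by simp [greedyMove, Prod.ext_iff, hi, hd]⟩
  · exact ⟨(i, 1), by simp [greedyMove, Prod.ext_iff, hi, hd]⟩

lemma stepProb_ne_top (n : ℕ) (p q : (Fin 3 → ℕ) × ℤ) : stepProb n p q ≠ ∞ := by
  have h9 : (1 / 9 : ℝ≥0∞) ≠ ∞ ∧ (2 / 9 : ℝ≥0∞) ≠ ∞ ∧ (4 / 9 : ℝ≥0∞) ≠ ∞ :=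
    ⟨by finiteness, by finiteness, by finiteness⟩
  unfold stepProb
  dsimp only
  split_ifs
  · exact h9.1
  · exact ENNReal.zero_ne_top
  · exact ENNReal.sum_ne_top.2 fun c _ => by grind [ENNReal.zero_ne_top]
  · exact ENNReal.one_ne_top
  all_goals exact ENNReal.zero_ne_top

/-- The Markov operator of the greedy game process. -/
noncomputable def greedyOp (n : ℕ) : Module.End ℝ ((Fin 3 → ℕ) × ℤ → ℝ) :=
  transitionOp (fun m p => (stepProb n p (greedyMove m p)).toReal) greedyMove

variable {n : ℕ} {N : Fin 3 → ℕ} (g : (Fin 3 → ℕ) × ℤ → ℝ) (s : ℤ)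

lemma greedyOp_apply : greedyOp n g (N, s) = ∑ i,
    ((stepProb n (N, s) (N + e i, s - 1)).toReal * g (N + e i, s - 1) +
      (stepProb n (N, s) (N + e i, s)).toReal * g (N + e i, s) +
      (stepProb n (N, s) (N + e i, s + 1)).toReal * g (N + e i, s + 1)) := by
  simp [greedyOp, transitionOp_apply, greedyMove, Fintype.sum_prod_type, sum_signType,
    ← sub_eq_add_neg]

lemma greedyOp_of_forall_ne (h : ∀ i, N i ≠ n) :
    greedyOp n g (N, s) =
      (∑ i, (g (N + e i, s - 1) + g (N + e i, s) + g (N + e i, s + 1))) / 9 := by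
  simp only [greedyOp_apply, Finset.sum_div]
  refine Finset.sum_congr rfl fun i _ => ?_
  simp only [stepProb, h, Finset.filter_false, Finset.card_empty, ↓reduceIte, add_right_inj,
    exists_apply_eq_apply', sub_eq_self, one_ne_zero, false_or, true_or, and_self, one_div,
    ENNReal.toReal_inv, ENNReal.toReal_ofNat, left_eq_add, or_false, or_true, add_eq_left]
  ring

lemma greedyOp_of_eq {c : Fin 3} (hc : N c = n) (h1 : N (c + 1) ≠ n) (h2 : N (c + 2) ≠ n) :
    greedyOp n g (N, s) =
      2 / 9 * g (N + e (c + 1), s + 1) + 1 / 9 * g (N + e (c + 1), s - 1) +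
        4 / 9 * g (N + e (c + 2), s) + 2 / 9 * g (N + e (c + 2), s + 1) := by
  have hfull : Finset.univ.filter (fun i => N i = n) = {c} := by
    ext i
    fin_cases c <;> fin_cases i <;> simp_all
  have hP (q : (Fin 3 → ℕ) × ℤ) : stepProb n (N, s) q =
      if q.1 = N + e (c + 1) ∧ q.2 = s + 1 then 2 / 9
      else if q.1 = N + e (c + 1) ∧ q.2 = s - 1 then 1 / 9
      else if q.1 = N + e (c + 2) ∧ q.2 = s then 4 / 9
      else if q.1 = N + e (c + 2) ∧ q.2 = s + 1 then 2 / 9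
      else 0 := by
    simp [stepProb, hfull, sum_fin_three_rotate _ c, hc, h1, h2]
  have hs : s - 1 ≠ s + 1 ∧ s ≠ s - 1 := by omega
  have hc2 : c ≠ c + 2 := by fin_cases c <;> decide
  simp only [greedyOp_apply, sum_fin_three_rotate _ c, hP, add_right_inj, e_injective.eq_iff, hs,
    hc2, and_false, and_true, false_and, ↓reduceIte, sub_eq_self, one_ne_zero, left_eq_add,
    add_eq_left, Fin.reduceEq, ENNReal.toReal_zero, zero_mul, add_zero, zero_add, one_div,
    ENNReal.toReal_inv, ENNReal.toReal_ofNat, ENNReal.toReal_div]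
  ring

lemma greedyOp_of_eq_of_eq {c : Fin 3} (hc : N c < n) (h1 : N (c + 1) = n) (h2 : N (c + 2) = n) :
    greedyOp n g (N, s) = g (N + e c, s + 1) := by
  have hfull : Finset.univ.filter (fun i => N i = n) = {c + 1, c + 2} := by
    ext i
    fin_cases c <;> fin_cases i <;> simp_all <;> omega
  have hcard : ({c + 1, c + 2} : Finset (Fin 3)).card = 2 := by fin_cases c <;> rfl
  have hP (q : (Fin 3 → ℕ) × ℤ) : stepProb n (N, s) q =
      if q.1 = N + e c ∧ q.2 = s + 1 then 1 else 0 := by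
    have hi (i : Fin 3) : N i < n ↔ i = c := by
      fin_cases c <;> fin_cases i <;> simp_all
    simp [stepProb, hfull, hcard, hi]
  have hs : s - 1 ≠ s + 1 ∧ s ≠ s - 1 := by omega
  simp [greedyOp_apply, sum_fin_three_rotate _ c, hP, e_injective.eq_iff, hs]

/-- `N` is a possible vector of throw counts when `k` of the `3 * n` rounds remain. -/
def Reachable (n k : ℕ) (N : Fin 3 → ℕ) : Prop :=
  (∀ i, N i ≤ n) ∧ ∑ i, N i + k = 3 * n

variable {k : ℕ}

lemma e_apply (i j : Fin 3) : e i j = if j = i then 1 else 0 := rfl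

lemma reachable_zero (n : ℕ) : Reachable n (3 * n) 0 := by simp [Reachable]

lemma Reachable.add_e (h : Reachable n (k + 1) N) {i : Fin 3} (hi : N i ≠ n) :
    Reachable n k (N + e i) := by
  have hle := h.1
  have hsum := h.2
  rw [sum_fin_three_rotate _ i] at hsum
  refine ⟨fun j => ?_, ?_⟩
  · rw [Pi.add_apply, e_apply]
    have := hle j
    split_ifs with hj
    · subst hj; omega
    · omega
  · simp only [sum_fin_three_rotate _ i, Pi.add_apply, e_apply, add_eq_left, if_true]
    rw [if_neg (by decide), if_neg (by decide)]
    omega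

lemma Reachable.eq_const (h : Reachable n 0 N) : N = fun _ => n := by
  have hle := h.1
  have hsum := h.2
  simp only [Fin.sum_univ_three, funext_iff, Fin.forall_fin_succ] at *
  grind

lemma Reachable.add_eq (h : Reachable n k N) {c : Fin 3} (hc : N c = n) :
    N (c + 1) + N (c + 2) + k = 2 * n := by
  have := h.2
  rw [sum_fin_three_rotate _ c] at this
  omega

lemma Reachable.phase (h : Reachable n (k + 1) N) : (∀ i, N i ≠ n) ∨
    (∃ c, N c = n ∧ N (c + 1) ≠ n ∧ N (c + 2) ≠ n) ∨
    ∃ c, N c < n ∧ N (c + 1) = n ∧ N (c + 2) = n := by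
  have hle := h.1
  have hsum := h.2
  simp only [Fin.sum_univ_three, Fin.forall_fin_succ, Fin.exists_fin_succ] at *
  grind

lemma greedyOp_pow_of_eq_of_eq (h : Reachable n k N) {c : Fin 3} (h1 : N (c + 1) = n)
    (h2 : N (c + 2) = n) : (greedyOp n ^ k) g (N, s) = g (fun _ => n, s + k) := by
  induction k generalizing N s with
  | zero => rw [h.eq_const, pow_zero, Module.End.one_apply, Nat.cast_zero, add_zero]
  | succ k ih =>
    have hc : N c < n := by
      have hsum := h.2
      rw [sum_fin_three_rotate _ c] at hsum
      omega
    rw [pow_succ', Module.End.mul_apply, greedyOp_of_eq_of_eq _ _ hc h1 h2,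
      ih _ (h.add_e hc.ne), Nat.cast_succ, add_assoc, add_comm (1 : ℤ)] <;>
    simp [e_apply] <;> omega

lemma greedyOp_pow_one (h : Reachable n k N) : (greedyOp n ^ k) 1 (N, s) = 1 := by
  induction k generalizing N s with
  | zero => rfl
  | succ k ih =>
    rw [pow_succ', Module.End.mul_apply]
    obtain hint | ⟨c, hc, h1, h2⟩ | ⟨c, hc, h1, h2⟩ := h.phase
    · simp only [greedyOp_of_forall_ne _ _ hint, ih _ (h.add_e (hint _))]
      norm_num
    · simp only [greedyOp_of_eq _ _ hc h1 h2, ih _ (h.add_e h1), ih _ (h.add_e h2)]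
      norm_num
    · rw [greedyOp_of_eq_of_eq _ _ hc h1 h2, ih _ (h.add_e hc.ne)]

/-- The score component of a state. -/
def score (p : (Fin 3 → ℕ) × ℤ) : ℝ := p.2

lemma sq_add_max_sub_le (a b θ₁ θ₂ : ℝ) :
    (a + max b 0 - (θ₁ + max θ₂ 0)) ^ 2 ≤ 2 * (a - θ₁) ^ 2 + 2 * (b - θ₂) ^ 2 := by
  have hmax : (max b 0 - max θ₂ 0) ^ 2 ≤ (b - θ₂) ^ 2 :=
    sq_le_sq.2 (abs_max_sub_max_le_abs b θ₂ 0)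
  nlinarith [sq_nonneg (a - θ₁ - (max b 0 - max θ₂ 0))]

lemma greedyOp_pow_comp_score (h : Reachable n k N) {c : Fin 3} (hc : N c = n)
    (hfull : N (c + 1) = n ∨ N (c + 2) = n) (φ : ℝ → ℝ) :
    (greedyOp n ^ k) (fun p => φ (score p)) (N, s) =
      φ (s + (n - N (c + 1) : ℝ) + max (2 * N (c + 1) - N (c + 2) - n : ℝ) 0) := by
  have hsum : (N (c + 1) + N (c + 2) + k : ℝ) = 2 * n := mod_cast h.add_eq hc
  have hk : (0 : ℝ) ≤ k := k.cast_nonneg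
  rcases hfull with h1 | h2
  · rw [greedyOp_pow_of_eq_of_eq (c := c + 2) _ _ h
      (by convert hc using 2; grind) (by convert h1 using 2; grind)]
    rw [h1] at hsum ⊢
    rw [max_eq_left (by linarith), score]
    push_cast
    congr 1
    linarith
  · rw [greedyOp_pow_of_eq_of_eq (c := c + 1) _ _ h
      (by convert h2 using 2; grind) (by convert hc using 2; grind)]
    rw [h2] at hsum ⊢
    rw [max_eq_right (by linarith), score]
    push_cast
    congr 1
    linarith

/-- Once throw `c` is used up, `score + (n - N (c + 1))` and `2 * N (c + 1) - N (c + 2) - n` are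
martingales, and the final score is the first one plus the positive part of the second. -/
lemma greedyOp_pow_sq_sub_le (h : Reachable n k N) {c : Fin 3} (hc : N c = n) (θ₁ θ₂ : ℝ) :
    (greedyOp n ^ k) (fun p => (score p - (θ₁ + max θ₂ 0)) ^ 2) (N, s) ≤
      2 * (s + (n - N (c + 1) : ℝ) - θ₁) ^ 2 +
        2 * ((2 * N (c + 1) - N (c + 2) - n : ℝ) - θ₂) ^ 2 + 16 / 3 * (k : ℝ) := by
  have hend {k N s} (h : Reachable n k N) (hc : N c = n)
      (hfull : N (c + 1) = n ∨ N (c + 2) = n) :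
      (greedyOp n ^ k) (fun p => (score p - (θ₁ + max θ₂ 0)) ^ 2) (N, s) ≤
        2 * (s + (n - N (c + 1) : ℝ) - θ₁) ^ 2 +
          2 * ((2 * N (c + 1) - N (c + 2) - n : ℝ) - θ₂) ^ 2 + 16 / 3 * (k : ℝ) := by
    rw [greedyOp_pow_comp_score s h hc hfull fun x => (x - (θ₁ + max θ₂ 0)) ^ 2]
    exact (sq_add_max_sub_le _ _ θ₁ θ₂).trans (le_add_of_nonneg_right (by positivity))
  induction k generalizing N s with
  | zero => exact hend h hc (.inl (by rw [h.eq_const]))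
  | succ k ih =>
    by_cases hfull : N (c + 1) = n ∨ N (c + 2) = n
    · exact hend h hc hfull
    · push Not at hfull
      obtain ⟨h1, h2⟩ := hfull
      have hN1 : (N + e (c + 1)) c = n := by simpa [e_apply] using hc
      have hN2 : (N + e (c + 2)) c = n := by simpa [e_apply] using hc
      have b1 := ih (s + 1) (h.add_e h1) hN1
      have b2 := ih (s - 1) (h.add_e h1) hN1
      have b3 := ih s (h.add_e h2) hN2
      have b4 := ih (s + 1) (h.add_e h2) hN2
      rw [pow_succ', Module.End.mul_apply, greedyOp_of_eq _ _ hc h1 h2]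
      simp only [Int.cast_add, Int.cast_sub, Int.cast_one, Pi.add_apply, e_apply, ↓reduceIte,
        Nat.cast_add, Nat.cast_one, add_right_inj, Fin.reduceEq, add_zero] at b1 b2 b3 b4
      push_cast
      linarith [b1, b2, b3, b4]


lemma greedyOp_comp_shift (a : ℤ) :
    greedyOp n (fun p => g (p.1, p.2 + a)) (N, s) = greedyOp n g (N, s + a) := by
  have hP (M : Fin 3 → ℕ) (d : ℤ) :
      stepProb n (N, s + a) (M, d + a) = stepProb n (N, s) (M, d) := by
    simp only [stepProb, add_sub_right_comm, add_right_comm _ a, add_left_inj]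
  simp only [greedyOp_apply, add_sub_right_comm _ a, add_right_comm _ a, hP]

lemma greedyOp_pow_comp_shift (a : ℤ) :
    (greedyOp n ^ k) (fun p => g (p.1, p.2 + a)) (N, s) = (greedyOp n ^ k) g (N, s + a) := by
  induction k generalizing g with
  | zero => rfl
  | succ k ih =>
    have hstep : greedyOp n (fun p => g (p.1, p.2 + a)) =
        fun p => greedyOp n g (p.1, p.2 + a) := funext fun p => greedyOp_comp_shift g p.2 a
    rw [pow_succ, Module.End.mul_apply, hstep, ih, Module.End.mul_apply]

/-- The expected final score when `k` rounds remain after the throws `N` and a zero score. -/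
noncomputable def meanScore (n k : ℕ) (N : Fin 3 → ℕ) : ℝ := (greedyOp n ^ k) score (N, 0)

/-- The expected squared final score when `k` rounds remain after the throws `N` and a zero
score. -/
noncomputable def meanSqScore (n k : ℕ) (N : Fin 3 → ℕ) : ℝ :=
  (greedyOp n ^ k) (fun p => score p ^ 2) (N, 0)

lemma greedyOp_pow_score (h : Reachable n k N) :
    (greedyOp n ^ k) score (N, s) = meanScore n k N + s := by
  have hshift : (fun p : (Fin 3 → ℕ) × ℤ => score (p.1, p.2 + s)) = score + (s : ℝ) • 1 := by
    ext p
    simp [score]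
  rw [← zero_add s, ← greedyOp_pow_comp_shift, hshift]
  simp [greedyOp_pow_one 0 h, meanScore]

lemma greedyOp_pow_score_sq (h : Reachable n k N) :
    (greedyOp n ^ k) (fun p => score p ^ 2) (N, s) =
      meanSqScore n k N + 2 * s * meanScore n k N + s ^ 2 := by
  have hshift : (fun p : (Fin 3 → ℕ) × ℤ => score (p.1, p.2 + s) ^ 2) =
      (fun p => score p ^ 2) + (2 * s : ℝ) • score + (s ^ 2 : ℝ) • 1 := by
    ext p
    simp only [score, Int.cast_add, Pi.add_apply, Pi.smul_apply, smul_eq_mul, Pi.one_apply, mul_one]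
    ring
  rw [← zero_add s, ← greedyOp_pow_comp_shift (fun p => score p ^ 2), hshift]
  simp [greedyOp_pow_one 0 h, meanScore, meanSqScore]

lemma meanScore_succ (h : Reachable n (k + 1) N) (hN : ∀ i, N i ≠ n) :
    meanScore n (k + 1) N = (∑ i, meanScore n k (N + e i)) / 3 := by
  rw [meanScore, pow_succ', Module.End.mul_apply, greedyOp_of_forall_ne _ _ hN]
  simp only [greedyOp_pow_score _ (h.add_e (hN _)), Fin.sum_univ_three]
  push_cast
  ring

lemma meanSqScore_succ (h : Reachable n (k + 1) N) (hN : ∀ i, N i ≠ n) :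
    meanSqScore n (k + 1) N = (∑ i, meanSqScore n k (N + e i)) / 3 + 2 / 3 := by
  rw [meanSqScore, pow_succ', Module.End.mul_apply, greedyOp_of_forall_ne _ _ hN]
  simp only [greedyOp_pow_score_sq _ (h.add_e (hN _)), Fin.sum_univ_three]
  push_cast
  ring

end GreedyOperator

section FreeWalk

variable {n k : ℕ} {N : Fin 3 → ℕ}

/-- The Markov operator of the walk that plays each throw with probability `1 / 3` for ever. -/
noncomputable def freeOp : Module.End ℝ ((Fin 3 → ℕ) → ℝ) :=
  transitionOp (fun _ _ => 1 / 3) fun i N => N + e i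

lemma freeOp_apply (g : (Fin 3 → ℕ) → ℝ) (N : Fin 3 → ℕ) :
    freeOp g N = (∑ i, g (N + e i)) / 3 := by
  rw [freeOp, transitionOp_apply, ← Finset.mul_sum, one_div_mul_eq_div]

lemma freeOp_pow_succ_apply (g : (Fin 3 → ℕ) → ℝ) (N : Fin 3 → ℕ) :
    (freeOp ^ (k + 1)) g N = (∑ i, (freeOp ^ k) g (N + e i)) / 3 := by
  rw [pow_succ', Module.End.mul_apply, freeOp_apply]

lemma freeOp_pow_one (N : Fin 3 → ℕ) : (freeOp ^ k) 1 N = 1 := by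
  induction k generalizing N with
  | zero => rfl
  | succ k ih =>
    simp only [freeOp_pow_succ_apply, ih]
    norm_num

/-- The largest of the three cyclic differences of the throw counts, to which the greedy score
is close as soon as one of the throws is used up. -/
noncomputable def cyclicMax (N : Fin 3 → ℕ) : ℝ :=
  max (N 0 - N 1 : ℝ) (max (N 1 - N 2 : ℝ) (N 2 - N 0 : ℝ))

/-- The sum of the squared cyclic differences of `N - a`, a quadratic Lyapunov function that
controls `cyclicMax` and the number of rounds left when a throw is used up. -/
noncomputable def dispersion (a : Fin 3 → ℝ) (N : Fin 3 → ℕ) : ℝ :=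
  ∑ i, ((N i - a i) - (N (i + 1) - a (i + 1))) ^ 2

lemma cyclicMax_rotate (N : Fin 3 → ℕ) (c : Fin 3) :
    cyclicMax N = max (N c - N (c + 1) : ℝ)
      (max (N (c + 1) - N (c + 2) : ℝ) (N (c + 2) - N c : ℝ)) := by
  fin_cases c <;> simp [cyclicMax, max_comm, max_left_comm]

lemma sq_cyclicMax_sub_le_dispersion (M N : Fin 3 → ℕ) :
    (cyclicMax M - cyclicMax N) ^ 2 ≤ dispersion (fun i => N i) M := by
  have hmax (a b c a' b' c' : ℝ) : (max a (max b c) - max a' (max b' c')) ^ 2 ≤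
      (a - a') ^ 2 + (b - b') ^ 2 + (c - c') ^ 2 := by
    have hmax := abs_max_sub_max_le_max b c b' c'
    have := (abs_max_sub_max_le_max a (max b c) a' (max b' c')).trans (max_le_max_left _ hmax)
    obtain h | h | h := (le_max_iff.1 this).imp_right le_max_iff.1 <;>
    nlinarith [sq_le_sq.2 h, sq_nonneg (a - a'), sq_nonneg (b - b'), sq_nonneg (c - c')]
  refine (hmax _ _ _ _ _ _).trans_eq ?_
  simp only [dispersion, Fin.sum_univ_three, zero_add, Fin.reduceAdd]
  ring

lemma dispersion_step (a : Fin 3 → ℝ) (N : Fin 3 → ℕ) :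
    (∑ i, dispersion a (N + e i)) / 3 = dispersion a N + 2 := by
  simp only [dispersion, Pi.add_apply, e_apply, Nat.cast_add, Nat.cast_ite, Nat.cast_one,
    Nat.cast_zero, Fin.sum_univ_three, zero_add, Fin.reduceAdd, ↓reduceIte, one_ne_zero, add_zero,
    Fin.reduceEq, zero_ne_one]
  ring

lemma dispersion_zero_zero : dispersion 0 0 = 0 := by simp [dispersion]

lemma freeOp_pow_dispersion (a : Fin 3 → ℝ) (N : Fin 3 → ℕ) :
    (freeOp ^ k) (dispersion a) N = dispersion a N + 2 * k := by
  induction k generalizing N with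
  | zero => simp
  | succ k ih =>
    simp only [freeOp_pow_succ_apply, ih, Finset.sum_add_distrib, add_div, dispersion_step,
      Finset.sum_const, Finset.card_univ, Fintype.card_fin, nsmul_eq_mul]
    push_cast
    ring

lemma freeOp_pow_sq_sub_cyclicMax_le (N : Fin 3 → ℕ) :
    (freeOp ^ k) (fun M => (cyclicMax M - cyclicMax N) ^ 2) N ≤ 2 * k := by
  calc (freeOp ^ k) (fun M => (cyclicMax M - cyclicMax N) ^ 2) N
      ≤ (freeOp ^ k) (dispersion fun i => N i) N :=
        transitionOp_pow_mono (fun _ _ => by norm_num)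
          (fun M => sq_cyclicMax_sub_le_dispersion M N) k N
    _ = 2 * k := by simp [freeOp_pow_dispersion, dispersion]

lemma Reachable.sq_le_dispersion (h : Reachable n k N) {c : Fin 3} (hc : N c = n) :
    (k : ℝ) ^ 2 ≤ 2 * dispersion 0 N := by
  have hsum : (N (c + 1) + N (c + 2) + k : ℝ) = 2 * n := mod_cast h.add_eq hc
  set x : ℝ := n - N (c + 1) with hx
  set y : ℝ := n - N (c + 2) with hy
  have hdisp : dispersion 0 N = x ^ 2 + (y - x) ^ 2 + y ^ 2 := by
    rw [dispersion, sum_fin_three_rotate _ c, add_assoc c, add_assoc c,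
      show (1 + 1 : Fin 3) = 2 from rfl, show (2 + 1 : Fin 3) = 0 from rfl, add_zero, hc, hx, hy]
    simp only [Pi.zero_apply]
    ring
  have hk : (k : ℝ) = x + y := by linarith
  rw [hdisp, hk]
  nlinarith [sq_nonneg (x - y), sq_nonneg x, sq_nonneg y]

lemma mean_map_le_map_mean {ι : Type*} [Fintype ι] [Nonempty ι] {s : Set ℝ} {φ : ℝ → ℝ}
    (hφ : ConcaveOn ℝ s φ) {x : ι → ℝ} (hx : ∀ i, x i ∈ s) :
    (∑ i, φ (x i)) / Fintype.card ι ≤ φ ((∑ i, x i) / Fintype.card ι) := by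
  simpa only [smul_eq_mul, ← Finset.mul_sum, inv_mul_eq_div, Finset.sum_div] using
    hφ.le_map_sum (t := Finset.univ) (w := fun _ => (Fintype.card ι : ℝ)⁻¹) (p := x)
      (fun _ _ => by positivity) (by simp) fun i _ => hx i

/-- Jensen's inequality carries the bound through the rounds before a throw is used up, since
`dispersion 0 N + 2 * k` is a martingale; from then on it dominates `k ^ 2 / 2`. -/
lemma abs_le_of_averaging {A : ℕ → (Fin 3 → ℕ) → ℝ} {φ : ℝ → ℝ}
    (hconc : ConcaveOn ℝ (Set.Ici 0) φ) (hmono : MonotoneOn φ (Set.Ici 0))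
    (hstep : ∀ k N, Reachable n (k + 1) N → (∀ i, N i ≠ n) →
      A (k + 1) N = (∑ i, A k (N + e i)) / 3)
    (hfull : ∀ k N c, Reachable n k N → N c = n → |A k N| ≤ φ (k ^ 2))
    (h : Reachable n k N) : |A k N| ≤ φ (2 * (dispersion 0 N + 2 * k)) := by
  have hG (N : Fin 3 → ℕ) : 0 ≤ dispersion 0 N := Finset.sum_nonneg fun _ _ => sq_nonneg _
  have hend {k N} (h : Reachable n k N) {c : Fin 3} (hc : N c = n) :
      |A k N| ≤ φ (2 * (dispersion 0 N + 2 * k)) := by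
    have hk := h.sq_le_dispersion hc
    refine (hfull k N c h hc).trans (hmono (sq_nonneg (k : ℝ)) ?_ ?_)
    · have := hG N
      exact Set.mem_Ici.2 (by positivity)
    · linarith [k.cast_nonneg (α := ℝ)]
  induction k generalizing N with
  | zero =>
    exact hend h (c := 0) (by rw [h.eq_const])
  | succ k ih =>
    by_cases hN : ∀ i, N i ≠ n
    · have hjensen := mean_map_le_map_mean hconc
        (x := fun i => 2 * (dispersion 0 (N + e i) + 2 * k))
        fun i => Set.mem_Ici.2 (by have := hG (N + e i); positivity)
      have hmean : (∑ i, 2 * (dispersion 0 (N + e i) + 2 * (k : ℝ))) / 3 =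
          2 * (dispersion 0 N + 2 * (k + 1 : ℕ)) := by
        have := dispersion_step 0 N
        rw [← Finset.mul_sum, Finset.sum_add_distrib, Fin.sum_const, nsmul_eq_mul]
        push_cast
        linarith
      rw [Fintype.card_fin, Nat.cast_ofNat, hmean] at hjensen
      calc |A (k + 1) N| ≤ (∑ i, |A k (N + e i)|) / 3 := by
            rw [hstep k N h hN, abs_div, abs_of_pos (by norm_num : (0 : ℝ) < 3)]
            gcongr
            exact Finset.abs_sum_le_sum_abs _ _
        _ ≤ (∑ i, φ (2 * (dispersion 0 (N + e i) + 2 * k))) / 3 := by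
            gcongr with i
            exact ih (h.add_e (hN i))
        _ ≤ φ (2 * (dispersion 0 N + 2 * (k + 1 : ℕ))) := hjensen
    · push Not at hN
      exact hend h hN.choose_spec

end FreeWalk

section WeakConvergence

variable {Ω ι : Type*} [TopologicalSpace Ω] [MeasurableSpace Ω] [OpensMeasurableSpace Ω]
  {l : Filter ι} {P : ι → ProbabilityMeasure Ω} {Q : ProbabilityMeasure Ω} {f H : Ω → ℝ}

lemma tendsto_integral_min_natCast {μ : Measure Ω} (hf : Continuous f) (h0 : ∀ x, 0 ≤ f x)
    (hfint : Integrable f μ) :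
    Tendsto (fun M : ℕ => ∫ x, min (f x) M ∂μ) atTop (𝓝 (∫ x, f x ∂μ)) := by
  refine tendsto_integral_of_dominated_convergence f
    (fun M => (hf.min continuous_const).measurable.aestronglyMeasurable) hfint
    (fun M => ae_of_all _ fun x => ?_) (ae_of_all _ fun x => ?_)
  · rw [norm_of_nonneg (le_min (h0 x) M.cast_nonneg)]
    exact min_le_left _ _
  · refine tendsto_const_nhds.congr' ?_
    filter_upwards [eventually_ge_atTop ⌈f x⌉₊] with M hM
    exact (min_eq_left (Nat.ceil_le.1 hM)).symm

lemma eventually_lt_integral_of_tendsto (hP : Tendsto P l (𝓝 Q)) (hf : Continuous f)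
    (h0 : ∀ x, 0 ≤ f x) (hQ : Integrable f (Q : Measure Ω))
    (hPint : ∀ i, Integrable f (P i : Measure Ω)) {b : ℝ} (hb : b < ∫ x, f x ∂(Q : Measure Ω)) :
    ∀ᶠ i in l, b < ∫ x, f x ∂(P i : Measure Ω) := by
  obtain ⟨M, hM⟩ := ((tendsto_integral_min_natCast hf h0 hQ).eventually_const_lt hb).exists
  let g : BoundedContinuousFunction Ω ℝ :=
    .ofNormedAddCommGroup (fun x => min (f x) M) (hf.min continuous_const) M fun x => by
      rw [norm_of_nonneg (le_min (h0 x) M.cast_nonneg)]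
      exact min_le_right _ _
  have hg := (ProbabilityMeasure.tendsto_iff_forall_integral_tendsto.1 hP g).eventually_const_lt hM
  filter_upwards [hg] with i hi
  exact hi.trans_le (integral_mono (g.integrable _) (hPint i) fun x => min_le_left _ _)

/-- Both `H + f` and `H - f` are nonnegative, so that their integrals are lower semicontinuous. -/
theorem tendsto_integral_of_tendsto_of_abs_le (hP : Tendsto P l (𝓝 Q)) (hf : Continuous f)
    (hH : Continuous H) (hfH : ∀ x, |f x| ≤ H x) (hQ : Integrable H (Q : Measure Ω))
    (hPint : ∀ i, Integrable H (P i : Measure Ω))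
    (hlim : Tendsto (fun i => ∫ x, H x ∂(P i : Measure Ω)) l (𝓝 (∫ x, H x ∂(Q : Measure Ω)))) :
    Tendsto (fun i => ∫ x, f x ∂(P i : Measure Ω)) l (𝓝 (∫ x, f x ∂(Q : Measure Ω))) := by
  have hf_int {μ : Measure Ω} (h : Integrable H μ) : Integrable f μ :=
    h.mono' hf.measurable.aestronglyMeasurable (ae_of_all _ hfH)
  refine Metric.tendsto_nhds.2 fun ε hε => ?_
  have hadd := eventually_lt_integral_of_tendsto hP (hH.add hf)
    (fun x => neg_le_iff_add_nonneg'.1 (neg_le_of_abs_le (hfH x))) (hQ.add (hf_int hQ))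
    (fun i => (hPint i).add (hf_int (hPint i))) (sub_lt_self _ (half_pos hε))
  have hsub := eventually_lt_integral_of_tendsto hP (hH.sub hf)
    (fun x => sub_nonneg.2 (le_of_abs_le (hfH x))) (hQ.sub (hf_int hQ))
    (fun i => (hPint i).sub (hf_int (hPint i))) (sub_lt_self _ (half_pos hε))
  filter_upwards [hadd, hsub, Metric.tendsto_nhds.1 hlim _ (half_pos hε)] with i hi hi' hHi
  rw [integral_add' hQ (hf_int hQ), integral_add' (hPint i) (hf_int (hPint i))] at hi
  rw [integral_sub' hQ (hf_int hQ), integral_sub' (hPint i) (hf_int (hPint i))] at hi'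
  rw [dist_eq, abs_lt] at *
  constructor <;> linarith

end WeakConvergence

section CentralLimit

variable {E : Type*} [NormedAddCommGroup E] [InnerProductSpace ℝ E] [MeasurableSpace E]
  [BorelSpace E] [SecondCountableTopology E]

/-- The law of the sum of `k` independent variables with law `ν`. -/
noncomputable def convPow (ν : Measure E) : ℕ → Measure E
  | 0 => Measure.dirac 0
  | k + 1 => ν ∗ convPow ν k

variable {ν : Measure E} [IsProbabilityMeasure ν]

instance isProbabilityMeasure_convPow (k : ℕ) : IsProbabilityMeasure (convPow ν k) := by
  induction k with
  | zero => exact Measure.dirac.isProbabilityMeasure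
  | succ k ih => exact inferInstanceAs (IsProbabilityMeasure (ν ∗ convPow ν k))

lemma charFun_convPow (k : ℕ) (t : E) : charFun (convPow ν k) t = charFun ν t ^ k := by
  induction k with
  | zero => simp [convPow, charFun_dirac]
  | succ k ih => rw [convPow, charFun_conv, ih, pow_succ']

/-- The law of `k ^ (-1 / 2)` times the sum of `k` independent variables with law `ν`. -/
noncomputable def scaledConvPow (ν : Measure E) [IsProbabilityMeasure ν] (k : ℕ) :
    ProbabilityMeasure E :=
  ⟨(convPow ν k).map ((√k)⁻¹ • ·), Measure.isProbabilityMeasure_map (by fun_prop)⟩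

/-- The **central limit theorem** in several dimensions, reduced to the one-dimensional case by
projecting on lines. -/
theorem tendsto_scaledConvPow [FiniteDimensional ℝ E] (hmean : ∀ t : E, ∫ x, inner ℝ x t ∂ν = 0)
    (hcov : ∀ t : E, ∫ x, inner ℝ x t ^ 2 ∂ν = ‖t‖ ^ 2) :
    Tendsto (scaledConvPow ν) atTop (𝓝 ⟨stdGaussian E, inferInstance⟩) := by
  refine ProbabilityMeasure.tendsto_of_tendsto_charFun fun t => ?_
  rcases eq_or_ne t 0 with rfl | ht
  · simp
  set u := ‖t‖⁻¹ • t
  have htu : ‖t‖ • u = t := smul_inv_smul₀ (norm_ne_zero_iff.2 ht) t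
  have hu : ‖u‖ = 1 := norm_smul_inv_norm ht
  have hproj (s : ℝ) : charFun (ν.map fun x => inner ℝ x u) s = charFun ν (s • u) := by
    rw [charFun_apply, charFun_apply, integral_map (by fun_prop) (by fun_prop)]
    simp only [real_inner_smul_right, RCLike.inner_apply, conj_trivial]
  have hone := tendsto_charFun_inv_sqrt_mul_pow (P := ν) (X := fun x => inner ℝ x u)
    (by fun_prop) (hmean u) (by simpa [hu] using hcov u) ‖t‖
  have hscaled (k : ℕ) : charFun (scaledConvPow ν k) t =
      charFun (ν.map fun x => inner ℝ x u) ((√k)⁻¹ * ‖t‖) ^ k := by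
    rw [hproj, mul_smul, htu, ← charFun_convPow]
    exact charFun_map_smul _ _
  simp only [hscaled]
  simpa [charFun_stdGaussian] using hone

end CentralLimit

section Comparison

variable {n k : ℕ} {N : Fin 3 → ℕ}

lemma Reachable.cyclicMax_eq (h : Reachable n k N) {c : Fin 3} (hc : N c = n) :
    cyclicMax N = (n - N (c + 1) : ℝ) + max (2 * N (c + 1) - N (c + 2) - n : ℝ) 0 := by
  have h1 : (N (c + 1) : ℝ) ≤ n := mod_cast h.1 _
  have h2 : (N (c + 2) : ℝ) ≤ n := mod_cast h.1 _
  rw [cyclicMax_rotate N c, hc, ← max_assoc, max_eq_left, ← max_add_add_left, max_comm]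
  · congr 1 <;> ring
  · exact le_max_of_le_left (by linarith)

lemma Reachable.cyclicMax_mem_Icc (h : Reachable n k N) {c : Fin 3} (hc : N c = n) :
    cyclicMax N ∈ Set.Icc 0 (k : ℝ) := by
  have hsum : (N (c + 1) + N (c + 2) + k : ℝ) = 2 * n := mod_cast h.add_eq hc
  have h1 : (N (c + 1) : ℝ) ≤ n := mod_cast h.1 _
  have h2 : (N (c + 2) : ℝ) ≤ n := mod_cast h.1 _
  rw [h.cyclicMax_eq hc]
  constructor
  · linarith [le_max_right (2 * N (c + 1) - N (c + 2) - n : ℝ) 0]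
  · rw [← max_add_add_left]
    exact max_le (by linarith) (by linarith)

lemma Reachable.meanScore_moments (h : Reachable n k N) {c : Fin 3} (hc : N c = n) :
    (meanScore n k N - cyclicMax N) ^ 2 ≤
        meanSqScore n k N - 2 * cyclicMax N * meanScore n k N + cyclicMax N ^ 2 ∧
      meanSqScore n k N - 2 * cyclicMax N * meanScore n k N + cyclicMax N ^ 2 ≤ 16 / 3 * k := by
  have hone := greedyOp_pow_one 0 h
  have hlow := sq_transitionOp_pow_sub_le (fun _ _ => ENNReal.toReal_nonneg) hone score
    (cyclicMax N)
  have hup := greedyOp_pow_sq_sub_le 0 h hc (n - N (c + 1)) (2 * N (c + 1) - N (c + 2) - n)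
  rw [← h.cyclicMax_eq hc] at hup
  have hexp := transitionOp_pow_sq_sub hone score (cyclicMax N)
  exact ⟨hlow.trans_eq hexp, hexp.symm.trans_le (hup.trans_eq (by simp))⟩

lemma freeOp_pow_cyclicMax_moments (N : Fin 3 → ℕ) :
    ((freeOp ^ k) cyclicMax N - cyclicMax N) ^ 2 ≤
        (freeOp ^ k) (fun M => cyclicMax M ^ 2) N - 2 * cyclicMax N * (freeOp ^ k) cyclicMax N +
          cyclicMax N ^ 2 ∧
      (freeOp ^ k) (fun M => cyclicMax M ^ 2) N - 2 * cyclicMax N * (freeOp ^ k) cyclicMax N +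
          cyclicMax N ^ 2 ≤ 2 * k := by
  have hone := freeOp_pow_one (k := k) N
  have hexp := transitionOp_pow_sq_sub hone cyclicMax (cyclicMax N)
  exact ⟨(sq_transitionOp_pow_sub_le (fun _ _ => by norm_num) hone _ _).trans_eq hexp,
    hexp.symm.trans_le (freeOp_pow_sq_sub_cyclicMax_le N)⟩

lemma Reachable.abs_meanScore_sub_le (h : Reachable n k N) {c : Fin 3} (hc : N c = n) :
    |meanScore n k N - (freeOp ^ k) cyclicMax N| ≤ 4 * √k := by
  obtain ⟨hm, hm'⟩ := h.meanScore_moments hc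
  obtain ⟨hq, hq'⟩ := freeOp_pow_cyclicMax_moments (k := k) N
  have hk : √k ^ 2 = (k : ℝ) := sq_sqrt k.cast_nonneg
  have h1 : |meanScore n k N - cyclicMax N| ≤ 7 / 3 * √k :=
    abs_le_of_sq_le_sq (by rw [mul_pow, hk]; linarith) (by positivity)
  have h2 : |(freeOp ^ k) cyclicMax N - cyclicMax N| ≤ 5 / 3 * √k :=
    abs_le_of_sq_le_sq (by rw [mul_pow, hk]; linarith) (by positivity)
  linarith [abs_sub_le (meanScore n k N) (cyclicMax N) ((freeOp ^ k) cyclicMax N),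
    abs_sub_comm (cyclicMax N) ((freeOp ^ k) cyclicMax N)]

lemma Reachable.abs_meanSqScore_sub_le (h : Reachable n k N) {c : Fin 3} (hc : N c = n) :
    |meanSqScore n k N - (freeOp ^ k) (fun M => cyclicMax M ^ 2) N - 2 / 3 * k| ≤
      16 * (k * √k) := by
  obtain ⟨hm, hm'⟩ := h.meanScore_moments hc
  obtain ⟨hq, hq'⟩ := freeOp_pow_cyclicMax_moments (k := k) N
  obtain ⟨hF, hFk⟩ := h.cyclicMax_mem_Icc hc
  have hcross : |cyclicMax N * (meanScore n k N - (freeOp ^ k) cyclicMax N)| ≤ k * (4 * √k) := by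
    rw [abs_mul, abs_of_nonneg hF]
    exact mul_le_mul hFk (h.abs_meanScore_sub_le hc) (abs_nonneg _) k.cast_nonneg
  have hk : (k : ℝ) ≤ k * √k := by
    rcases k.eq_zero_or_pos with rfl | hk
    · simp
    · exact le_mul_of_one_le_right k.cast_nonneg (one_le_sqrt.2 (mod_cast hk))
  have := sq_nonneg (meanScore n k N - cyclicMax N)
  have := sq_nonneg ((freeOp ^ k) cyclicMax N - cyclicMax N)
  rw [abs_le] at hcross ⊢
  constructor <;> linarith [hcross.1, hcross.2]

lemma concaveOn_const_mul_rpow {c a : ℝ} (hc : 0 ≤ c) (ha0 : 0 ≤ a) (ha1 : a ≤ 1) :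
    ConcaveOn ℝ (Set.Ici 0) fun x : ℝ => c * x ^ a :=
  (concaveOn_rpow ha0 ha1).smul hc

lemma monotoneOn_const_mul_rpow {c a : ℝ} (hc : 0 ≤ c) (ha : 0 ≤ a) :
    MonotoneOn (fun x : ℝ => c * x ^ a) (Set.Ici 0) :=
  fun _ hx _ _ hxy => mul_le_mul_of_nonneg_left (rpow_le_rpow hx hxy ha) hc

lemma abs_meanScore_sub_freeOp_le (n : ℕ) :
    |meanScore n (3 * n) 0 - (freeOp ^ (3 * n)) cyclicMax 0| ≤ 4 * (12 * n) ^ (1 / 4 : ℝ) := by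
  convert abs_le_of_averaging (A := fun k N => meanScore n k N - (freeOp ^ k) cyclicMax N)
    (concaveOn_const_mul_rpow (c := 4) (a := 1 / 4) (by norm_num) (by norm_num) (by norm_num))
    (monotoneOn_const_mul_rpow (by norm_num) (by norm_num)) (fun k N h hN => ?_)
    (fun k N c h hc => ?_) (reachable_zero n) using 3
  · rw [dispersion_zero_zero]
    push_cast
    ring
  · rw [meanScore_succ h hN, freeOp_pow_succ_apply, Finset.sum_sub_distrib, sub_div]
  · refine (h.abs_meanScore_sub_le hc).trans_eq ?_
    rw [← rpow_natCast_mul k.cast_nonneg, sqrt_eq_rpow]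
    norm_num

lemma abs_meanSqScore_sub_freeOp_le (n : ℕ) :
    |meanSqScore n (3 * n) 0 - (freeOp ^ (3 * n)) (fun M => cyclicMax M ^ 2) 0 - 2 * n| ≤
      16 * (12 * n) ^ (3 / 4 : ℝ) := by
  convert abs_le_of_averaging (A := fun k N =>
      meanSqScore n k N - (freeOp ^ k) (fun M => cyclicMax M ^ 2) N - 2 / 3 * k)
    (concaveOn_const_mul_rpow (c := 16) (a := 3 / 4) (by norm_num) (by norm_num) (by norm_num))
    (monotoneOn_const_mul_rpow (by norm_num) (by norm_num)) (fun k N h hN => ?_)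
    (fun k N c h hc => ?_) (reachable_zero n) using 3
  · push_cast
    ring
  · rw [dispersion_zero_zero]
    push_cast
    ring
  · simp only [meanSqScore_succ h hN, freeOp_pow_succ_apply, Fin.sum_univ_three]
    push_cast
    ring
  · refine (h.abs_meanSqScore_sub_le hc).trans_eq ?_
    rw [← rpow_natCast_mul k.cast_nonneg, sqrt_eq_rpow, ← rpow_one_add' k.cast_nonneg]
    all_goals norm_num

lemma tendsto_div_rpow_zero_of_abs_le {u : ℕ → ℝ} {C c a b : ℝ} (hc : 0 ≤ c) (hab : a < b)
    (hu : ∀ n : ℕ, |u n| ≤ C * (c * n) ^ a) :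
    Tendsto (fun n : ℕ => u n / n ^ b) atTop (𝓝 0) := by
  have hlim : Tendsto (fun n : ℕ => C * c ^ a * (n : ℝ) ^ (-(b - a))) atTop (𝓝 0) := by
    simpa using ((tendsto_rpow_neg_atTop (sub_pos.2 hab)).comp
      tendsto_natCast_atTop_atTop).const_mul (C * c ^ a)
  refine squeeze_zero_norm' ?_ hlim
  filter_upwards [eventually_gt_atTop 0] with n hn
  have hn : (0 : ℝ) < n := mod_cast hn
  rw [norm_div, norm_eq_abs, norm_of_nonneg (by positivity), neg_sub, rpow_sub hn, ← mul_div_assoc,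
    mul_assoc, ← mul_rpow hc hn.le]
  gcongr
  exact hu n

lemma tendsto_meanScore_sub_freeOp :
    Tendsto (fun n : ℕ => (meanScore n (3 * n) 0 - (freeOp ^ (3 * n)) cyclicMax 0) / √n)
      atTop (𝓝 0) := by
  simp only [sqrt_eq_rpow]
  exact tendsto_div_rpow_zero_of_abs_le (by norm_num) (by norm_num) abs_meanScore_sub_freeOp_le

lemma tendsto_meanSqScore_sub_freeOp :
    Tendsto (fun n : ℕ =>
      (meanSqScore n (3 * n) 0 - (freeOp ^ (3 * n)) (fun M => cyclicMax M ^ 2) 0 - 2 * n) / n)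
      atTop (𝓝 0) := by
  simpa only [rpow_one] using
    tendsto_div_rpow_zero_of_abs_le (b := 1) (by norm_num) (by norm_num)
      abs_meanSqScore_sub_freeOp_le

end Comparison

section PlaneEmbedding

/-- The vertices of an equilateral triangle centred at `0`, on which a uniformly distributed point
has identity covariance. -/
noncomputable def planeStep : Fin 3 → ℂ := ![⟨√6 / 2, -√2 / 2⟩, ⟨-√6 / 2, -√2 / 2⟩, ⟨0, √2⟩]

/-- The projection of the throw counts along the diagonal to the plane. -/
noncomputable def planeWalk (N : Fin 3 → ℕ) : ℂ := ∑ i, N i • planeStep i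

/-- The uniform distribution on the vertices `planeStep i`. -/
noncomputable def stepLaw : Measure ℂ := (3⁻¹ : ℝ≥0∞) • ∑ i, Measure.dirac (planeStep i)

/-- The support function of the triangle with vertices `1, exp (± 2 * π * I / 3)`. -/
noncomputable def triangleSupport (z : ℂ) : ℝ :=
  max z.re (max (-z.re / 2 - √3 / 2 * z.im) (-z.re / 2 + √3 / 2 * z.im))

instance isProbabilityMeasure_stepLaw : IsProbabilityMeasure stepLaw := by
  constructor
  simp [stepLaw, ENNReal.inv_mul_cancel]

lemma integrable_stepLaw (h : ℂ → ℝ) : Integrable h stepLaw :=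
  (integrable_finsetSum_measure.2 fun _ _ => integrable_dirac (by finiteness)).smul_measure
    (by finiteness)

lemma integral_stepLaw (h : ℂ → ℝ) : ∫ z, h z ∂stepLaw = (∑ i, h (planeStep i)) / 3 := by
  rw [stepLaw, integral_smul_measure,
    integral_finsetSum_measure fun _ _ => integrable_dirac (by finiteness)]
  simp [div_eq_inv_mul]

lemma integral_inner_stepLaw (t : ℂ) : ∫ z, inner ℝ z t ∂stepLaw = 0 := by
  simp only [integral_stepLaw, Complex.inner, Complex.mul_re, Complex.conj_re, Complex.conj_im,
    planeStep, Fin.sum_univ_three, Matrix.cons_val_zero, Matrix.cons_val_one, Matrix.cons_val]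
  ring

lemma integral_inner_sq_stepLaw (t : ℂ) : ∫ z, inner ℝ z t ^ 2 ∂stepLaw = ‖t‖ ^ 2 := by
  have h6 : √6 ^ 2 = 6 := sq_sqrt (by norm_num)
  have h2 : √2 ^ 2 = 2 := sq_sqrt (by norm_num)
  simp only [integral_stepLaw, Complex.inner, Complex.mul_re, Complex.conj_re, Complex.conj_im,
    planeStep, Fin.sum_univ_three, Matrix.cons_val_zero, Matrix.cons_val_one, Matrix.cons_val,
    Complex.sq_norm, Complex.normSq_apply]
  linear_combination t.re ^ 2 / 6 * h6 + t.im ^ 2 / 2 * h2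

lemma planeWalk_add_e (N : Fin 3 → ℕ) (i : Fin 3) :
    planeWalk (N + e i) = planeWalk N + planeStep i := by
  simp [planeWalk, e_apply, add_smul, Finset.sum_add_distrib]

lemma freeOp_pow_comp_planeWalk {h : ℂ → ℝ} (hh : Measurable h) (k : ℕ) (N : Fin 3 → ℕ) :
    Integrable h (convPow stepLaw k) ∧
      (freeOp ^ k) (fun M => h (planeWalk M)) N = ∫ z, h (planeWalk N + z) ∂convPow stepLaw k := by
  induction k generalizing h N with
  | zero => simp [convPow, integrable_dirac]
  | succ k ih =>
    have hshift {h : ℂ → ℝ} (hh : Measurable h) (z : ℂ) :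
        Integrable (fun w => h (z + w)) (convPow stepLaw k) :=
      (ih (hh.comp (measurable_const_add z)) 0).1
    have hint {h : ℂ → ℝ} (hh : Measurable h) : Integrable h (stepLaw ∗ convPow stepLaw k) :=
      (integrable_conv_iff hh.aestronglyMeasurable).2
        ⟨ae_of_all _ (hshift hh), integrable_stepLaw _⟩
    refine ⟨hint hh, ?_⟩
    have hN : Integrable (fun z => h (planeWalk N + z)) (stepLaw ∗ convPow stepLaw k) :=
      hint (hh.comp (measurable_const_add _))
    rw [convPow, integral_conv hN, integral_stepLaw, freeOp_pow_succ_apply]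
    simp only [(ih hh _).2, planeWalk_add_e, add_assoc]

lemma re_planeWalk (N : Fin 3 → ℕ) : (planeWalk N).re = √6 / 2 * (N 0 - N 1) := by
  simp only [planeWalk, planeStep, nsmul_eq_mul, Fin.sum_univ_three, Matrix.cons_val_zero,
    Matrix.cons_val_one, Matrix.cons_val, Complex.add_re, Complex.mul_re, Complex.natCast_re,
    Complex.natCast_im, zero_mul, sub_zero, mul_zero, add_zero]
  ring

lemma im_planeWalk (N : Fin 3 → ℕ) : (planeWalk N).im = √2 / 2 * (2 * N 2 - N 0 - N 1) := by
  simp only [planeWalk, planeStep, nsmul_eq_mul, Fin.sum_univ_three, Matrix.cons_val_zero,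
    Matrix.cons_val_one, Matrix.cons_val, Complex.add_im, Complex.mul_im, Complex.natCast_re,
    Complex.natCast_im, zero_mul, add_zero]
  ring

lemma cyclicMax_eq_triangleSupport (N : Fin 3 → ℕ) :
    cyclicMax N = √(2 / 3) * triangleSupport (planeWalk N) := by
  have h6 : √(2 / 3 : ℝ) * √6 = 2 := by
    rw [← sqrt_mul (by norm_num), sqrt_eq_iff_mul_self_eq] <;> norm_num
  have h32 : √(2 / 3 : ℝ) * (√3 * √2) = 2 := by
    rw [← sqrt_mul (by norm_num), ← sqrt_mul (by norm_num), sqrt_eq_iff_mul_self_eq] <;> norm_num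
  rw [triangleSupport, mul_max_of_nonneg _ _ (sqrt_nonneg _), mul_max_of_nonneg _ _ (sqrt_nonneg _),
    re_planeWalk, im_planeWalk, cyclicMax]
  congr 2
  · linear_combination (N 1 - N 0 : ℝ) / 2 * h6
  · linear_combination (N 0 - N 1 : ℝ) / 4 * h6 + (2 * N 2 - N 0 - N 1 : ℝ) / 4 * h32
  · linear_combination (N 0 - N 1 : ℝ) / 4 * h6 - (2 * N 2 - N 0 - N 1 : ℝ) / 4 * h32

lemma sq_norm_planeWalk (N : Fin 3 → ℕ) : ‖planeWalk N‖ ^ 2 = dispersion 0 N := by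
  have h6 : √6 ^ 2 = 6 := sq_sqrt (by norm_num)
  have h2 : √2 ^ 2 = 2 := sq_sqrt (by norm_num)
  simp only [dispersion, Fin.sum_univ_three, Fin.reduceAdd, Pi.zero_apply, Complex.sq_norm,
    Complex.normSq_apply, re_planeWalk, im_planeWalk]
  linear_combination (N 0 - N 1 : ℝ) ^ 2 / 4 * h6 + (2 * N 2 - N 0 - N 1 : ℝ) ^ 2 / 4 * h2

lemma continuous_triangleSupport : Continuous triangleSupport := by
  unfold triangleSupport
  fun_prop

lemma triangleSupport_smul {r : ℝ} (hr : 0 ≤ r) (z : ℂ) :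
    triangleSupport (r • z) = r * triangleSupport z := by
  simp only [triangleSupport, mul_max_of_nonneg _ _ hr, Complex.real_smul, Complex.re_ofReal_mul,
    Complex.im_ofReal_mul]
  ring_nf

lemma abs_triangleSupport_le (z : ℂ) : |triangleSupport z| ≤ ‖z‖ := by
  have h3 : √3 ^ 2 = 3 := sq_sqrt (by norm_num)
  have hz : ‖z‖ ^ 2 = z.re ^ 2 + z.im ^ 2 := by
    rw [Complex.sq_norm, Complex.normSq_apply]
    ring
  have hbound {a b c : ℝ} (ha : |a| ≤ ‖z‖) (hb : |b| ≤ ‖z‖) (hc : |c| ≤ ‖z‖) :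
      |max a (max b c)| ≤ ‖z‖ := abs_max_le_max_abs_abs.trans
    (max_le ha (abs_max_le_max_abs_abs.trans (max_le hb hc)))
  refine hbound (Complex.abs_re_le_norm z) (abs_le_of_sq_le_sq ?_ (norm_nonneg z))
    (abs_le_of_sq_le_sq ?_ (norm_nonneg z))
  · nlinarith [sq_nonneg (√3 * z.re - z.im)]
  · nlinarith [sq_nonneg (√3 * z.re + z.im)]

lemma integrable_scaledConvPow_stepLaw {h : ℂ → ℝ} (hh : Measurable h) (k : ℕ) :
    Integrable h (scaledConvPow stepLaw k : Measure ℂ) :=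
  (integrable_map_measure hh.aestronglyMeasurable (by fun_prop)).2
    (freeOp_pow_comp_planeWalk (hh.comp (measurable_const_smul _)) k 0).1

lemma integral_scaledConvPow_stepLaw {h : ℂ → ℝ} (hh : Measurable h) (k : ℕ) :
    ∫ z, h z ∂(scaledConvPow stepLaw k : Measure ℂ) =
      (freeOp ^ k) (fun M => h ((√k)⁻¹ • planeWalk M)) 0 := by
  have := (freeOp_pow_comp_planeWalk (hh.comp (measurable_const_smul (√k)⁻¹)) k 0).2
  refine (integral_map (by fun_prop) hh.aestronglyMeasurable).trans ?_
  simpa [planeWalk] using this.symm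

lemma integral_sq_norm_scaledConvPow_stepLaw {k : ℕ} (hk : 0 < k) :
    ∫ z, ‖z‖ ^ 2 ∂(scaledConvPow stepLaw k : Measure ℂ) = 2 := by
  have : (0 : ℝ) < k := mod_cast hk
  have hnorm : (fun M => ‖(√k)⁻¹ • planeWalk M‖ ^ 2) = (k : ℝ)⁻¹ • dispersion 0 := by
    ext M
    simp [mul_pow, sq_norm_planeWalk]
  rw [integral_scaledConvPow_stepLaw (by fun_prop), hnorm, map_smul, Pi.smul_apply,
    freeOp_pow_dispersion, dispersion_zero_zero, smul_eq_mul]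
  field_simp
  ring

lemma freeOp_pow_cyclicMax_pow {k : ℕ} (hk : 0 < k) (j : ℕ) :
    (freeOp ^ k) (fun M => cyclicMax M ^ j) 0 =
      (√(2 / 3) * √k) ^ j * ∫ z, triangleSupport z ^ j ∂(scaledConvPow stepLaw k : Measure ℂ) := by
  have hk : 0 < √(k : ℝ) := sqrt_pos.2 (mod_cast hk)
  have hscale : (fun M => cyclicMax M ^ j) = (√(2 / 3) * √k) ^ j •
      fun M => triangleSupport ((√k)⁻¹ • planeWalk M) ^ j := by
    ext M
    simp only [cyclicMax_eq_triangleSupport, triangleSupport_smul (inv_nonneg.2 hk.le),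
      Pi.smul_apply, smul_eq_mul, ← mul_pow]
    field_simp
  rw [integral_scaledConvPow_stepLaw (h := fun z => triangleSupport z ^ j)
    (continuous_triangleSupport.pow j).measurable, hscale, map_smul, Pi.smul_apply, smul_eq_mul]

end PlaneEmbedding

section GaussianDensity

variable {E : Type*} [NormedAddCommGroup E] [InnerProductSpace ℝ E] [FiniteDimensional ℝ E]
  [MeasurableSpace E] [BorelSpace E]

lemma integrable_exp_neg_sq_norm_div_two : Integrable (fun x : E => rexp (-‖x‖ ^ 2 / 2)) := by
  have h := (GaussianFourier.integrable_cexp_neg_mul_sq_norm_add (b := 1 / 2) (by norm_num) 0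
    (0 : E)).re
  refine h.congr (ae_of_all _ fun x => ?_)
  have hexp : -(1 / 2) * (‖x‖ : ℂ) ^ 2 + 0 * (inner ℝ (0 : E) x : ℝ) = (-‖x‖ ^ 2 / 2 : ℝ) := by
    push_cast
    ring
  simp only [hexp, ← Complex.ofReal_exp, RCLike.re_to_complex, Complex.ofReal_re]

/-- The density of the standard Gaussian measure with respect to `volume`. -/
noncomputable def stdGaussianDensity (x : E) : ℝ :=
  (2 * π) ^ (-(Module.finrank ℝ E / 2 : ℝ)) * rexp (-‖x‖ ^ 2 / 2)

lemma charFun_withDensity_stdGaussianDensity (t : E) :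
    charFun (volume.withDensity fun x : E => ENNReal.ofReal (stdGaussianDensity x)) t =
      Complex.exp (-‖t‖ ^ 2 / 2) := by
  have hpi : ((2 * π : ℝ) : ℂ) ≠ 0 := mod_cast two_pi_pos.ne'
  have hfourier := GaussianFourier.integral_cexp_neg_mul_sq_norm_add (b := 1 / 2) (by norm_num)
    Complex.I t
  calc charFun (volume.withDensity fun x : E => ENNReal.ofReal (stdGaussianDensity x)) t
      = ∫ x : E, stdGaussianDensity x • Complex.exp (inner ℝ x t * Complex.I) := by
        unfold stdGaussianDensity
        rw [charFun_apply, integral_withDensity_eq_integral_toReal_smul (by fun_prop) (by simp)]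
        congr with x
        rw [ENNReal.toReal_ofReal (by positivity)]
    _ = ((2 * π : ℝ) : ℂ) ^ (-(Module.finrank ℝ E / 2 : ℂ)) *
          ∫ x : E, Complex.exp (-(1 / 2) * ‖x‖ ^ 2 + Complex.I * inner ℝ t x) := by
        rw [← integral_const_mul]
        congr with x
        rw [stdGaussianDensity, Complex.real_smul, Complex.ofReal_mul,
          Complex.ofReal_cpow two_pi_pos.le, Complex.ofReal_exp, mul_assoc, ← Complex.exp_add,
          real_inner_comm]
        push_cast
        ring_nf
    _ = Complex.exp (-‖t‖ ^ 2 / 2) := by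
        rw [hfourier, show (π : ℂ) / (1 / 2) = (2 * π : ℝ) by push_cast; ring, ← mul_assoc,
          ← Complex.cpow_add _ _ hpi, neg_add_cancel, Complex.cpow_zero, Complex.I_sq]
        ring_nf

lemma integral_stdGaussian (f : E → ℝ) :
    ∫ x, f x ∂stdGaussian E = ∫ x, stdGaussianDensity x * f x := by
  have : IsFiniteMeasure
      (volume.withDensity fun x : E => ENNReal.ofReal (stdGaussianDensity x)) :=
    isFiniteMeasure_withDensity_ofReal (integrable_exp_neg_sq_norm_div_two.const_mul _).2
  have hdensity : stdGaussian E =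
      volume.withDensity fun x : E => ENNReal.ofReal (stdGaussianDensity x) :=
    Measure.ext_of_charFun <| funext fun t => by
      rw [charFun_stdGaussian, charFun_withDensity_stdGaussianDensity]
  unfold stdGaussianDensity at *
  rw [hdensity, integral_withDensity_eq_integral_toReal_smul (by fun_prop) (by simp)]
  congr with x
  rw [ENNReal.toReal_ofReal (by positivity), smul_eq_mul]

end GaussianDensity

section TriangleMoments

lemma integral_rpow_add_one_mul_exp_neg_sq_div_two {p : ℝ} (hp : -2 < p) :
    ∫ r in Set.Ioi (0 : ℝ), r ^ (p + 1) * rexp (-r ^ 2 / 2) = 2 ^ (p / 2) * Gamma (p / 2 + 1) := by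
  have h := integral_rpow_mul_exp_neg_mul_rpow (p := 2) (q := p + 1) (b := 1 / 2) (by norm_num)
    (by linarith) (by norm_num)
  have hconst : (1 / 2 : ℝ) ^ (-(p + 1 + 1) / 2) * (1 / 2) = 2 ^ (p / 2) := by
    rw [one_div, inv_rpow zero_le_two, ← rpow_neg zero_le_two, ← rpow_neg_one,
      ← rpow_add zero_lt_two]
    ring_nf
  rw [hconst] at h
  simpa only [rpow_two, show (p + 1 + 1) / 2 = p / 2 + 1 by ring, neg_mul, one_div,
    inv_mul_eq_div, ← neg_div] using h

lemma stdGaussianDensity_polarCoord_symm (p : ℝ × ℝ) :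
    stdGaussianDensity (Complex.polarCoord.symm p) = rexp (-p.1 ^ 2 / 2) / (2 * π) := by
  rw [stdGaussianDensity, Complex.norm_polarCoord_symm, sq_abs, Complex.finrank_real_complex]
  norm_num [rpow_neg_one, div_eq_inv_mul]

lemma integral_stdGaussian_complex_of_homogeneous {f : ℂ → ℝ} {m : ℕ}
    (hf : ∀ r : ℝ, 0 < r → ∀ z, f (r * z) = r ^ m * f z) :
    ∫ z, f z ∂stdGaussian ℂ = 2 ^ (m / 2 : ℝ) * Gamma (m / 2 + 1) *
      (∫ θ in (-π)..π, f (cos θ + sin θ * Complex.I)) / (2 * π) := by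
  have hm : (-2 : ℝ) < m := by linarith [(Nat.cast_nonneg m : (0 : ℝ) ≤ m)]
  rw [integral_stdGaussian, ← Complex.integral_comp_polarCoord_symm, polarCoord_target,
    ← integral_rpow_add_one_mul_exp_neg_sq_div_two hm,
    intervalIntegral.integral_of_le (by linarith [pi_pos]), integral_Ioc_eq_integral_Ioo,
    ← setIntegral_prod_mul, ← integral_div]
  refine setIntegral_congr_fun (measurableSet_Ioi.prod measurableSet_Ioo) fun p hp => ?_
  have hr : 0 < p.1 := hp.1
  simp only [stdGaussianDensity_polarCoord_symm]
  simp only [Complex.polarCoord_symm_apply, hf _ hr, rpow_add_one hr.ne', rpow_natCast, smul_eq_mul]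
  ring

lemma triangleSupport_cos_add_sin_mul_I (θ : ℝ) :
    triangleSupport (cos θ + sin θ * Complex.I) =
      max (cos θ) (max (cos (θ + 2 * π / 3)) (cos (θ - 2 * π / 3))) := by
  have hcos : cos (2 * π / 3) = -(1 / 2) := by
    rw [show 2 * π / 3 = π - π / 3 by ring, cos_pi_sub, cos_pi_div_three]
  have hsin : sin (2 * π / 3) = √3 / 2 := by
    rw [show 2 * π / 3 = π - π / 3 by ring, sin_pi_sub, sin_pi_div_three]
  simp only [triangleSupport, cos_add, cos_sub, hcos, hsin, Complex.add_re, Complex.add_im,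
    Complex.re_ofReal_mul, Complex.im_ofReal_mul, Complex.I_re, Complex.I_im, Complex.ofReal_re,
    Complex.ofReal_im]
  ring_nf

lemma periodic_triangleSupport :
    Function.Periodic (fun θ : ℝ => triangleSupport (cos θ + sin θ * Complex.I)) (2 * π / 3) := by
  intro θ
  have hcos : cos (θ + 2 * π / 3 + 2 * π / 3) = cos (θ - 2 * π / 3) := by
    rw [← cos_add_two_pi (θ - 2 * π / 3)]
    ring_nf
  simp only [triangleSupport_cos_add_sin_mul_I, hcos, add_sub_cancel_right]
  ac_rfl

lemma triangleSupport_of_abs_le_pi_div_three {θ : ℝ} (hθ : |θ| ≤ π / 3) :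
    triangleSupport (cos θ + sin θ * Complex.I) = cos θ := by
  have ⟨hl, hu⟩ := abs_le.1 hθ
  have hcos {x : ℝ} (hx : |θ| ≤ |x|) (hx' : |x| ≤ π) : cos x ≤ cos θ := by
    rw [← cos_abs x, ← cos_abs θ]
    exact cos_le_cos_of_nonneg_of_le_pi (abs_nonneg θ) hx' hx
  rw [triangleSupport_cos_add_sin_mul_I, max_eq_left (max_le (hcos ?_ ?_) (hcos ?_ ?_))]
  · exact hθ.trans (le_abs.2 (.inl (by linarith)))
  · exact abs_le.2 ⟨by linarith, by linarith⟩
  · exact hθ.trans (le_abs.2 (.inr (by linarith)))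
  · exact abs_le.2 ⟨by linarith, by linarith⟩

lemma integral_triangleSupport_pow (j : ℕ) :
    ∫ θ in (-π)..π, triangleSupport (cos θ + sin θ * Complex.I) ^ j =
      3 * ∫ θ in (-(π / 3))..(π / 3), cos θ ^ j := by
  have hcont : Continuous fun θ : ℝ => triangleSupport (cos θ + sin θ * Complex.I) ^ j := by
    have := continuous_triangleSupport
    fun_prop
  have hper : Function.Periodic (fun θ : ℝ => triangleSupport (cos θ + sin θ * Complex.I) ^ j)
    (2 * π / 3) := periodic_triangleSupport.comp (· ^ j)
  calc ∫ θ in (-π)..π, triangleSupport (cos θ + sin θ * Complex.I) ^ j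
      = ∫ θ in (-π)..(-π + (3 : ℤ) • (2 * π / 3)),
          triangleSupport (cos θ + sin θ * Complex.I) ^ j := by
        rw [zsmul_eq_mul, Int.cast_ofNat, mul_div_cancel₀ _ three_ne_zero, two_mul,
          neg_add_cancel_left]
    _ = 3 * ∫ θ in (-(π / 3))..(-(π / 3) + 2 * π / 3),
          triangleSupport (cos θ + sin θ * Complex.I) ^ j := by
        rw [hper.intervalIntegral_add_zsmul_eq 3 _ fun _ _ => hcont.intervalIntegrable _ _,
          hper.intervalIntegral_add_eq (-π) (-(π / 3)), zsmul_eq_mul, Int.cast_ofNat]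
    _ = 3 * ∫ θ in (-(π / 3))..(π / 3), cos θ ^ j := by
        rw [show -(π / 3) + 2 * π / 3 = π / 3 by ring]
        congr 1
        refine intervalIntegral.integral_congr fun θ hθ => ?_
        rw [Set.uIcc_of_le (by linarith [pi_pos])] at hθ
        simp only [triangleSupport_of_abs_le_pi_div_three (abs_le.2 hθ)]

lemma integral_triangleSupport_pow_stdGaussian (j : ℕ) :
    ∫ z, triangleSupport z ^ j ∂stdGaussian ℂ = 2 ^ (j / 2 : ℝ) * Gamma (j / 2 + 1) *
      (3 * ∫ θ in (-(π / 3))..(π / 3), cos θ ^ j) / (2 * π) := by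
  rw [integral_stdGaussian_complex_of_homogeneous (f := fun z => triangleSupport z ^ j) (m := j),
    integral_triangleSupport_pow]
  intro r hr z
  rw [← Complex.real_smul, triangleSupport_smul hr.le, mul_pow]

lemma integral_triangleSupport_stdGaussian :
    ∫ z, triangleSupport z ∂stdGaussian ℂ = 3 * √3 / (2 * √(2 * π)) := by
  have h := integral_triangleSupport_pow_stdGaussian 1
  have hpi : √π ^ 2 = π := sq_sqrt pi_pos.le
  have h2 : √2 ^ 2 = 2 := sq_sqrt zero_le_two
  simp only [pow_one, Nat.cast_one, integral_cos, sin_neg, sin_pi_div_three,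
    Gamma_add_one one_half_pos.ne', Gamma_one_half_eq, ← sqrt_eq_rpow] at h
  rw [h, sqrt_mul zero_le_two]
  field_simp
  rw [hpi, h2]
  ring

lemma integral_triangleSupport_sq_stdGaussian :
    ∫ z, triangleSupport z ^ 2 ∂stdGaussian ℂ = 1 + 3 * √3 / (4 * π) := by
  simp only [integral_triangleSupport_pow_stdGaussian 2, Nat.cast_ofNat,
    div_self (two_ne_zero' ℝ), rpow_one, Gamma_add_one one_ne_zero, Gamma_one, integral_cos_sq,
    sin_neg, cos_neg, sin_pi_div_three, cos_pi_div_three]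
  field_simp
  ring

lemma integral_sq_norm_stdGaussian : ∫ z, ‖z‖ ^ 2 ∂stdGaussian ℂ = 2 := by
  have hpi : ∫ θ in (-π)..π, ‖(cos θ + sin θ * Complex.I : ℂ)‖ ^ 2 = 2 * π := by
    simp only [Complex.ofReal_cos, Complex.ofReal_sin, Complex.norm_cos_add_sin_mul_I, one_pow,
      intervalIntegral.integral_const, smul_eq_mul]
    ring
  rw [integral_stdGaussian_complex_of_homogeneous (m := 2), hpi]
  · norm_num [Gamma_add_one, pi_ne_zero]
  · intro r _ z
    rw [norm_mul, Complex.norm_real, mul_pow, norm_eq_abs, sq_abs]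

end TriangleMoments

section Asymptotics

lemma integrable_sq_norm_stdGaussian : Integrable (fun z : ℂ => ‖z‖ ^ 2) (stdGaussian ℂ) :=
  .of_integral_ne_zero (by rw [integral_sq_norm_stdGaussian]; exact two_ne_zero)

lemma tendsto_integral_scaledConvPow_stepLaw {f : ℂ → ℝ} (hf : Continuous f)
    (hfle : ∀ z, |f z| ≤ 1 + ‖z‖ ^ 2) :
    Tendsto (fun k => ∫ z, f z ∂(scaledConvPow stepLaw k : Measure ℂ)) atTop
      (𝓝 (∫ z, f z ∂stdGaussian ℂ)) := by
  have hint (k : ℕ) : Integrable (fun z : ℂ => ‖z‖ ^ 2) (scaledConvPow stepLaw k : Measure ℂ) :=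
    integrable_scaledConvPow_stepLaw (by fun_prop) k
  have hgauss : Integrable (fun z : ℂ => 1 + ‖z‖ ^ 2) (stdGaussian ℂ) :=
    (integrable_const 1).add integrable_sq_norm_stdGaussian
  refine tendsto_integral_of_tendsto_of_abs_le (H := fun z => 1 + ‖z‖ ^ 2)
    (tendsto_scaledConvPow integral_inner_stepLaw integral_inner_sq_stepLaw) hf (by fun_prop) hfle
    hgauss (fun k => (integrable_const 1).add (hint k)) ?_
  refine tendsto_const_nhds.congr' ?_
  filter_upwards [eventually_gt_atTop 0] with k hk
  rw [integral_add (integrable_const _) (hint k), integral_sq_norm_scaledConvPow_stepLaw hk]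
  simp [integral_add (integrable_const _) integrable_sq_norm_stdGaussian,
    integral_sq_norm_stdGaussian]

lemma tendsto_freeOp_pow_cyclicMax_pow {j : ℕ} (hj : j ≤ 2) :
    Tendsto (fun n : ℕ => (freeOp ^ (3 * n)) (fun M => cyclicMax M ^ j) 0 / √n ^ j) atTop
      (𝓝 (√2 ^ j * ∫ z, triangleSupport z ^ j ∂stdGaussian ℂ)) := by
  have hle (z : ℂ) : |triangleSupport z ^ j| ≤ 1 + ‖z‖ ^ 2 := by
    rw [abs_pow]
    refine (pow_le_pow_left₀ (abs_nonneg _) (abs_triangleSupport_le z) j).trans ?_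
    interval_cases j <;> nlinarith [sq_nonneg (‖z‖ - 1)]
  have hlim := (tendsto_integral_scaledConvPow_stepLaw (f := fun z => triangleSupport z ^ j)
    (continuous_triangleSupport.pow j) hle).comp (tendsto_id.const_mul_atTop' (r := 3) three_pos)
  refine (hlim.const_mul (√2 ^ j)).congr' ?_
  filter_upwards [eventually_gt_atTop 0] with n hn
  have : 0 < √(n : ℝ) := sqrt_pos.2 (mod_cast hn)
  have hscale : √(2 / 3 : ℝ) * √(3 * n : ℕ) = √2 * √n := by
    rw [← sqrt_mul (by norm_num), ← sqrt_mul (by norm_num)]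
    push_cast
    ring_nf
  rw [freeOp_pow_cyclicMax_pow (by positivity), hscale, mul_pow]
  simp only [Function.comp_apply, id_eq]
  field_simp

lemma tendsto_meanScore_div_sqrt :
    Tendsto (fun n : ℕ => meanScore n (3 * n) 0 / √n) atTop (𝓝 (3 * √3 / (2 * √π))) := by
  have h := tendsto_meanScore_sub_freeOp.add (tendsto_freeOp_pow_cyclicMax_pow one_le_two)
  have hlim : 0 + √2 ^ 1 * ∫ z, triangleSupport z ^ 1 ∂stdGaussian ℂ = 3 * √3 / (2 * √π) := by
    simp only [pow_one, integral_triangleSupport_stdGaussian, sqrt_mul zero_le_two, zero_add]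
    field_simp
  rw [hlim] at h
  refine h.congr fun n => ?_
  simp only [pow_one]
  ring

lemma tendsto_meanSqScore_div :
    Tendsto (fun n : ℕ => meanSqScore n (3 * n) 0 / n) atTop (𝓝 (4 + 3 * √3 / (2 * π))) := by
  have h := (tendsto_meanSqScore_sub_freeOp.add
    (tendsto_freeOp_pow_cyclicMax_pow le_rfl)).add_const 2
  have hlim : 0 + √2 ^ 2 * (∫ z, triangleSupport z ^ 2 ∂stdGaussian ℂ) + 2 =
      4 + 3 * √3 / (2 * π) := by
    rw [integral_triangleSupport_sq_stdGaussian, sq_sqrt zero_le_two]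
    ring
  rw [hlim] at h
  refine h.congr' ?_
  filter_upwards [eventually_gt_atTop 0] with n hn
  rw [sq_sqrt n.cast_nonneg]
  field_simp
  ring

end Asymptotics

lemma IsGreedyProcess.variance_score {n : ℕ} {Ω : Type*} [MeasurableSpace Ω] {μ : Measure Ω}
    {NS : ℕ → Ω → (Fin 3 → ℕ) × ℤ} (h : IsGreedyProcess n μ NS) :
    variance (fun ω => ((NS (3 * n) ω).2 : ℝ)) μ =
      meanSqScore n (3 * n) 0 - meanScore n (3 * n) 0 ^ 2 := by
  obtain ⟨_, hmeas, hstart, hpath⟩ := h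
  have hexp (g : (Fin 3 → ℕ) × ℤ → ℝ) : Integrable (fun ω => g (NS (3 * n) ω)) μ ∧
      ∫ ω, g (NS (3 * n) ω) ∂μ = (greedyOp n ^ (3 * n)) g (0, 0) := by
    have hg : AEStronglyMeasurable g (μ.map (NS (3 * n))) :=
      (measurable_of_countable g).aestronglyMeasurable
    have hchain := integral_markovChain greedyMove_injective exists_greedyMove_of_stepProb_ne_zero
      (stepProb_ne_top n) hmeas hstart hpath le_rfl g
    rwa [integrable_map_measure hg (hmeas _).aemeasurable, integral_map (hmeas _).aemeasurable hg]
      at hchain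
  have hmem : MemLp (fun ω => score (NS (3 * n) ω)) 2 μ :=
    (memLp_two_iff_integrable_sq (hexp score).1.aestronglyMeasurable).2
      (hexp fun p => score p ^ 2).1
  calc variance (fun ω => score (NS (3 * n) ω)) μ
      = (∫ ω, score (NS (3 * n) ω) ^ 2 ∂μ) - (∫ ω, score (NS (3 * n) ω) ∂μ) ^ 2 :=
        variance_eq_sub hmem
    _ = meanSqScore n (3 * n) 0 - meanScore n (3 * n) 0 ^ 2 := by
        rw [(hexp score).2, (hexp fun p => score p ^ 2).2, meanSqScore, meanScore]

/-- equation (ymer3): `Var(S_n^gr)/n → 4 − (27 − 6√3)/(4π)`. -/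
theorem variance_greedy_score_asymptotics
    (Ω : ℕ → Type*) [∀ n, MeasurableSpace (Ω n)] (μ : ∀ n, Measure (Ω n))
    (NS : ∀ n, ℕ → Ω n → (Fin 3 → ℕ) × ℤ)
    (hproc : ∀ n, 1 ≤ n → IsGreedyProcess n (μ n) (NS n)) :
    Tendsto (fun n : ℕ =>
        variance (fun ω => (((NS n (3 * n) ω).2 : ℝ))) (μ n) / n)
      atTop (𝓝 (4 - (27 - 6 * Real.sqrt 3) / (4 * π))) := by
  have hlim : 4 + 3 * √3 / (2 * π) - (3 * √3 / (2 * √π)) ^ 2 =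
      4 - (27 - 6 * √3) / (4 * π) := by
    rw [div_pow, mul_pow, mul_pow, sq_sqrt (by norm_num : (0 : ℝ) ≤ 3), sq_sqrt pi_pos.le]
    field_simp
    ring
  rw [← hlim]
  refine (tendsto_meanSqScore_div.sub (tendsto_meanScore_div_sqrt.pow 2)).congr' ?_
  filter_upwards [eventually_ge_atTop 1] with n hn
  rw [(hproc n hn).variance_score, div_pow, sq_sqrt n.cast_nonneg, sub_div]

end RPSGreedy
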